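/- arXiv:1408.2743 — 10 statements merged into one kernel-verified Lean document; each statement's English description precedes it below -/
import Mathlib

section
/- Let C be a category with a left calculus of fractions (with respect to itself). Then for every n ≥ 1 and every 0 ≤ k ≤ n, every functor F : Λ(n,k) → C extends to a functor F̃ : P₊(n) → C whose restriction to Λ(n,k) equals F. (Equivalently, the simplicial set Ex N C is a Kan complex.) -/
open CategoryTheory

/-!
A cocone under `F` with apex `W` gives an extension: send both missing elements of `PPlus n` to
`W`. This works because the horn is a lower set of `PPlus n` (`mem_horn_of_le`).

The cocone exists because the horn is conically contractible onto the vertex `{k}`: for `S` in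
the horn, `S ∪ {k}` is again in the horn, and `S ⊆ S ∪ {k} ⊇ {k}`. Hence `S ↦ F (S ∪ {k})` lifts
to a functor from the horn to the under category of `F {k}`. The two axioms of a left calculus
of fractions say precisely that every under category of `C` is filtered (`isFiltered_under`), so
this functor, defined on a finite category, has a cocone; precomposing with
`F S ⟶ F (S ∪ {k})` gives one under `F`.
-/

/-- A category has a left calculus of fractions (with respect to itself) if it satisfies
(CF1) and (CF2). -/
def HasLCF (C : Type*) [Category C] : Prop :=
  (∀ ⦃X Y Z : C⦄ (s : X ⟶ Y) (t : X ⟶ Z),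
      ∃ (W : C) (u : Y ⟶ W) (v : Z ⟶ W), s ≫ u = t ≫ v) ∧
  (∀ ⦃X' X Y : C⦄ (f g : X ⟶ Y) (s : X' ⟶ X), s ≫ f = s ≫ g →
      ∃ (Y' : C) (t : Y ⟶ Y'), f ≫ t = g ≫ t)

/-- `PPlus n` is the poset of nonempty subsets of `{0, …, n}`, ordered by inclusion;
this is `c Sd Δ[n]`. -/
abbrev PPlus (n : ℕ) := {s : Finset (Fin (n+1)) // s.Nonempty}

/-- `Lam n k` is the full subposet of `PPlus n` obtained by removing the two elements
`{0, …, n}` and `{0, …, n} \ {k}`; this is `c Sd Λ^k[n]`. -/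
abbrev Lam (n : ℕ) (k : Fin (n+1)) :=
  {x : PPlus n // x.1 ≠ Finset.univ ∧ x.1 ≠ Finset.univ \ {k}}

/-- The inclusion of the horn `Lam n k` into `PPlus n`. -/
def lamIncl (n : ℕ) (k : Fin (n+1)) : Lam n k ⥤ PPlus n :=
  Monotone.functor (f := fun x => x.1) (fun _ _ h => h)

theorem isFiltered_under {C : Type*} [Category C] (h : HasLCF C) (X : C) :
    IsFiltered (Under X) where
  cocone_objs Y Z := by
    obtain ⟨W, u, v, e⟩ := h.1 Y.hom Z.hom
    exact ⟨Under.mk (Y.hom ≫ u), Under.homMk u, Under.homMk v e.symm, trivial⟩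
  cocone_maps Y Z f g := by
    obtain ⟨W, t, e⟩ := h.2 f.right g.right Y.hom (by rw [Under.w f, Under.w g])
    refine ⟨Under.mk (Z.hom ≫ t), Under.homMk t, ?_⟩
    ext
    exact e
  nonempty := ⟨Under.mk (𝟙 X)⟩

theorem mem_horn_of_le {n : ℕ} {k : Fin (n+1)} {x y : PPlus n} (hxy : x ≤ y)
    (hy : y.1 ≠ Finset.univ ∧ y.1 ≠ Finset.univ \ {k}) :
    x.1 ≠ Finset.univ ∧ x.1 ≠ Finset.univ \ {k} := by
  have hs : x.1 ⊆ y.1 := hxy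
  refine ⟨fun hx => hy.1 (Finset.univ_subset_iff.1 (hx ▸ hs)), fun hx => ?_⟩
  rw [hx] at hs
  by_cases hk : k ∈ y.1
  · apply hy.1
    ext i
    by_cases hi : i = k
    · simp [hi, hk]
    · simpa using hs (by simp [hi])
  · apply hy.2
    refine Finset.Subset.antisymm (fun i hi => ?_) hs
    have : i ≠ k := fun e => hk (e ▸ hi)
    simpa using this

theorem insert_mem_horn {n : ℕ} {k : Fin (n+1)} (x : Lam n k) :
    insert k x.1.1 ≠ Finset.univ ∧ insert k x.1.1 ≠ Finset.univ \ {k} := by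
  refine ⟨fun hx => ?_, fun hx => ?_⟩
  · by_cases hk : k ∈ x.1.1
    · exact x.2.1 (by rwa [Finset.insert_eq_of_mem hk] at hx)
    · apply x.2.2
      have e := congrArg (· \ {k}) hx
      simpa only [Finset.insert_sdiff_of_mem _ (Finset.mem_singleton_self k),
        Finset.sdiff_singleton_eq_erase, Finset.erase_eq_of_notMem hk] using e
  · have : k ∈ Finset.univ \ {k} := hx ▸ Finset.mem_insert_self k x.1.1
    simp at this

/-- The element `S ∪ {k}` of the horn. -/
def addVertex {n : ℕ} {k : Fin (n+1)} (x : Lam n k) : Lam n k :=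
  ⟨⟨insert k x.1.1, Finset.insert_nonempty _ _⟩, insert_mem_horn x⟩

theorem le_addVertex {n : ℕ} {k : Fin (n+1)} (x : Lam n k) : x ≤ addVertex x :=
  Finset.subset_insert k x.1.1

theorem addVertex_mono {n : ℕ} {k : Fin (n+1)} {x y : Lam n k} (h : x ≤ y) :
    addVertex x ≤ addVertex y :=
  Finset.insert_subset_insert k h

/-- The vertex `{k}`, as an element of the horn; this needs `1 ≤ n`. -/
def vertex {n : ℕ} (hn : 1 ≤ n) (k : Fin (n+1)) : Lam n k :=
  ⟨⟨{k}, Finset.singleton_nonempty k⟩, by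
    refine ⟨fun hx => ?_, fun hx => ?_⟩
    · have := congrArg Finset.card hx
      simp at this
      omega
    · have : k ∈ Finset.univ \ {k} := hx ▸ Finset.mem_singleton_self k
      simp at this⟩

theorem vertex_le_addVertex {n : ℕ} (hn : 1 ≤ n) {k : Fin (n+1)} (x : Lam n k) :
    vertex hn k ≤ addVertex x :=
  Finset.singleton_subset_iff.2 (Finset.mem_insert_self k x.1.1)

/-- The functor `S ↦ F (S ∪ {k})`, with values in the under category of `F {k}`. -/
def underFunctor {C : Type*} [Category C] {n : ℕ} (hn : 1 ≤ n) {k : Fin (n+1)}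
    (F : Lam n k ⥤ C) : Lam n k ⥤ Under (F.obj (vertex hn k)) where
  obj x := Under.mk (F.map (homOfLE (vertex_le_addVertex hn x)))
  map f := Under.homMk (F.map (homOfLE (addVertex_mono (leOfHom f))))
    (by simp only [Under.mk_hom, ← F.map_comp]; rfl)
  map_id x := by
    ext
    exact F.map_id _
  map_comp f g := by
    ext
    exact F.map_comp (homOfLE (addVertex_mono (leOfHom f))) (homOfLE (addVertex_mono (leOfHom g)))

theorem exists_cocone {C : Type*} [Category C] (h : HasLCF C) {n : ℕ} (hn : 1 ≤ n)
    {k : Fin (n+1)} (F : Lam n k ⥤ C) :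
    ∃ (W : C) (w : ∀ x, F.obj x ⟶ W), ∀ (x y : Lam n k) (f : x ⟶ y), F.map f ≫ w y = w x := by
  classical
  have := isFiltered_under h (F.obj (vertex hn k))
  have : Fintype (Lam n k) := Fintype.ofFinite _
  obtain ⟨c⟩ := IsFiltered.cocone_nonempty (underFunctor hn F)
  let q (x : Lam n k) : F.obj (addVertex x) ⟶ c.pt.right := (c.ι.app x).right
  refine ⟨c.pt.right, fun x => F.map (homOfLE (le_addVertex x)) ≫ q x, fun x y f => ?_⟩
  have e : F.map (homOfLE (addVertex_mono (leOfHom f))) ≫ q y = q x :=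
    congrArg CommaMorphism.right (c.w f)
  beta_reduce
  rw [← e, ← Category.assoc, ← Category.assoc, ← F.map_comp, ← F.map_comp]
  rfl

instance withTerminal_isThin (P : Type*) [Preorder P] : Quiver.IsThin (WithTerminal P) := by
  rintro (x | _) (y | _)
  · exact inferInstanceAs (Subsingleton (x ⟶ y))
  · exact inferInstanceAs (Subsingleton PUnit)
  · exact inferInstanceAs (Subsingleton PEmpty)
  · exact inferInstanceAs (Subsingleton PUnit)

open Classical in
/-- The object part of `collapse`. -/
noncomputable def collapseObj {n : ℕ} (k : Fin (n+1)) (x : PPlus n) : WithTerminal (Lam n k) :=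
  if hx : x.1 ≠ Finset.univ ∧ x.1 ≠ Finset.univ \ {k} then .of ⟨x, hx⟩ else .star

theorem collapse_hom {n : ℕ} (k : Fin (n+1)) {x y : PPlus n} (hxy : x ≤ y) :
    Nonempty (collapseObj k x ⟶ collapseObj k y) := by
  unfold collapseObj
  by_cases hy : y.1 ≠ Finset.univ ∧ y.1 ≠ Finset.univ \ {k}
  · rw [dif_pos hy, dif_pos (mem_horn_of_le hxy hy)]
    exact ⟨WithTerminal.incl.map (homOfLE hxy)⟩
  · rw [dif_neg hy]
    exact ⟨WithTerminal.starTerminal.from _⟩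

/-- The functor from `PPlus n` to the horn with a terminal object adjoined, which is the identity
on the horn and sends the two other elements to the terminal object. As the target is thin, only
the existence of the morphisms matters. -/
noncomputable def collapse {n : ℕ} (k : Fin (n+1)) : PPlus n ⥤ WithTerminal (Lam n k) where
  obj := collapseObj k
  map f := (collapse_hom k (leOfHom f)).some
  map_id _ := Subsingleton.elim _ _
  map_comp _ _ := Subsingleton.elim _ _

theorem lamIncl_comp_collapse {n : ℕ} (k : Fin (n+1)) :
    lamIncl n k ⋙ collapse k = WithTerminal.incl := by
  refine CategoryTheory.Functor.ext (fun x => ?_) (fun _ _ _ => Subsingleton.elim _ _)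
  exact dif_pos x.2

/-- If `C` has a left calculus of fractions, then every functor from a subdivided horn
extends to the subdivided simplex; equivalently `Ex N C` is a Kan complex. -/
theorem extension_of_hasLCF {C : Type*} [Category C] (h : HasLCF C) :
    ∀ (n : ℕ), 1 ≤ n → ∀ (k : Fin (n+1)) (F : Lam n k ⥤ C),
      ∃ G : PPlus n ⥤ C, lamIncl n k ⋙ G = F := by
  intro n hn k F
  obtain ⟨W, w, hw⟩ := exists_cocone h hn F
  refine ⟨collapse k ⋙ WithTerminal.lift F w hw, ?_⟩
  rw [← Functor.assoc, lamIncl_comp_collapse]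
  rfl
end

section
/- Let C be a category such that for every n ≥ 1 and every 0 ≤ k ≤ n, every functor Λ(n,k) → C extends along the inclusion to a functor P₊(n) → C (i.e., Ex N C is a Kan complex). Then C satisfies condition (CF1): for any two morphisms s : X ⟶ Y and t : X ⟶ Z with common source there exist an object W and morphisms u : Y ⟶ W, v : Z ⟶ W such that u ∘ s = v ∘ t. -/
/-!
The span `Y ← X → Z` is encoded as a diagram on the horn `Lam 2 0`, whose elements are
`{0}`, `{1}`, `{2}`, `{0,1}` and `{0,2}`: send `{0}` to `X`, the sets containing `1` to `Y` and
the sets containing `2` to `Z`. This is well defined because no element of the horn contains both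
`1` and `2`. In an extension to `PPlus 2`, the value `W` at `{0,1,2}` receives maps from the
values `Y` at `{0,1}` and `Z` at `{0,2}`, and both composites from `X` are the image of
`{0} ≤ {0,1,2}`.
-/

open CategoryTheory

open Limits

/-- The shape map from the horn to the walking span: `{0}` goes to the apex, sets containing `1`
to the left foot and sets containing `2` to the right foot. -/
def hornToSpanObj (x : Lam 2 0) : WalkingSpan :=
  if 1 ∈ x.1.1 then WalkingSpan.left else if 2 ∈ x.1.1 then WalkingSpan.right else WalkingSpan.zero

lemma horn_not_both (x : Lam 2 0) : ¬ (1 ∈ x.1.1 ∧ 2 ∈ x.1.1) := by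
  obtain ⟨⟨S, hS⟩, h⟩ := x
  revert S
  decide

lemma hornToSpan_hom {x y : Lam 2 0} (hxy : x ≤ y) :
    Nonempty (hornToSpanObj x ⟶ hornToSpanObj y) := by
  have hsub : x.1.1 ⊆ y.1.1 := hxy
  have hy := horn_not_both y
  unfold hornToSpanObj
  by_cases h1 : 1 ∈ x.1.1
  · have h1y := hsub h1
    simp only [h1, h1y, if_true]
    exact ⟨𝟙 _⟩
  · by_cases h2 : 2 ∈ x.1.1
    · have h2y := hsub h2
      have h1y : 1 ∉ y.1.1 := fun h => hy ⟨h, h2y⟩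
      simp only [h1, h2, h1y, h2y, if_true, if_false]
      exact ⟨𝟙 _⟩
    · simp only [h1, h2, if_false]
      split_ifs
      exacts [⟨WalkingSpan.Hom.fst⟩, ⟨WalkingSpan.Hom.snd⟩, ⟨𝟙 _⟩]

/-- `hornToSpanObj` as a functor. Hom-sets of the walking span are subsingletons, so the choice of
morphisms is immaterial and the functor laws are automatic. -/
noncomputable def hornToSpan : Lam 2 0 ⥤ WalkingSpan where
  obj := hornToSpanObj
  map f := (hornToSpan_hom (leOfHom f)).some
  map_id _ := Subsingleton.elim _ _
  map_comp _ _ := Subsingleton.elim _ _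

/-- The vertex `{0}` of the horn. -/
def hornVertex : Lam 2 0 := ⟨⟨{0}, by decide⟩, by decide⟩

/-- The edge `{0, 1}` of the horn. -/
def hornEdgeLeft : Lam 2 0 := ⟨⟨{0, 1}, by decide⟩, by decide⟩

/-- The edge `{0, 2}` of the horn. -/
def hornEdgeRight : Lam 2 0 := ⟨⟨{0, 2}, by decide⟩, by decide⟩

/-- The top element `{0, 1, 2}` of `PPlus 2`. -/
def simplexTop : PPlus 2 := ⟨Finset.univ, Finset.univ_nonempty⟩

lemma le_simplexTop (x : PPlus 2) : x ≤ simplexTop := Finset.subset_univ x.1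

/-- If every functor from a subdivided horn into `C` extends to the subdivided simplex
(i.e. `Ex N C` is a Kan complex), then `C` satisfies (CF1): any two morphisms with common
source admit a common multiple. -/
theorem cf1_of_extension {C : Type*} [Category C]
    (h : ∀ (n : ℕ), 1 ≤ n → ∀ (k : Fin (n+1)) (F : Lam n k ⥤ C),
        ∃ G : PPlus n ⥤ C, lamIncl n k ⋙ G = F) :
    ∀ ⦃X Y Z : C⦄ (s : X ⟶ Y) (t : X ⟶ Z),
      ∃ (W : C) (u : Y ⟶ W) (v : Z ⟶ W), s ≫ u = t ≫ v := by
  intro X Y Z s t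
  obtain ⟨G, hG⟩ := h 2 (by norm_num) 0 (hornToSpan ⋙ span s t)
  let e : lamIncl 2 0 ⋙ G ≅ hornToSpan ⋙ span s t := eqToIso hG
  let top (x : Lam 2 0) : (lamIncl 2 0 ⋙ G).obj x ⟶ G.obj simplexTop :=
    G.map (homOfLE (le_simplexTop x.1))
  have top_nat {x y : Lam 2 0} (f : x ⟶ y) :
      (hornToSpan ⋙ span s t).map f ≫ e.inv.app y ≫ top y = e.inv.app x ≫ top x := by
    rw [← Category.assoc, e.inv.naturality, Category.assoc]
    congr 1
    exact (G.map_comp _ _).symm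
  let f : hornVertex ⟶ hornEdgeLeft := homOfLE (by decide : ({0} : Finset (Fin 3)) ⊆ {0, 1})
  let g : hornVertex ⟶ hornEdgeRight := homOfLE (by decide : ({0} : Finset (Fin 3)) ⊆ {0, 2})
  -- The values of `hornToSpan` at the three elements used reduce definitionally.
  have hf : hornToSpan.map f = (WalkingSpan.Hom.fst : WalkingSpan.zero ⟶ WalkingSpan.left) :=
    Subsingleton.elim (α := (WalkingSpan.zero ⟶ WalkingSpan.left)) _ _
  have hg : hornToSpan.map g = (WalkingSpan.Hom.snd : WalkingSpan.zero ⟶ WalkingSpan.right) :=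
    Subsingleton.elim (α := (WalkingSpan.zero ⟶ WalkingSpan.right)) _ _
  have hs : (hornToSpan ⋙ span s t).map f = s := congrArg (span s t).map hf
  have ht : (hornToSpan ⋙ span s t).map g = t := congrArg (span s t).map hg
  have key := (top_nat f).trans (top_nat g).symm
  rw [hs, ht] at key
  exact ⟨G.obj simplexTop, e.inv.app hornEdgeLeft ≫ top hornEdgeLeft,
    e.inv.app hornEdgeRight ≫ top hornEdgeRight, key⟩
end

section
/- Let C be a category such that for every n ≥ 1 and every 0 ≤ k ≤ n, every functor Λ(n,k) → C extends along the inclusion to a functor P₊(n) → C (i.e., Ex N C is a Kan complex). Then C satisfies condition (CF2): for any morphisms f, g : X ⟶ Y and s : X' ⟶ X with f ∘ s = g ∘ s, there exist an object Y' and a morphism t : Y ⟶ Y' with t ∘ f = t ∘ g. -/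
/-!
An extension of `F : Lam n k ⥤ C` to `PPlus n` yields a cocone under `F`, whose apex is the value
at `{0, …, n}` (`exists_cocone`). So it suffices to find a functor on `Lam 3 0` every cocone under
which coequalizes `f` and `g`. In `Lam 3 0` the elements strictly above `{0}` form the hexagon

  `{0,1} - {0,1,2} - {0,2} - {0,2,3} - {0,3} - {0,1,3} - {0,1}`.

Send `{0}` and `{1}` to `X'`, `{0,1}` to `X` and every other element to `Y`; the arrow
`{0,1} ⟶ {0,1,2}` goes to `f`, the arrow `{0,1} ⟶ {0,1,3}` goes to `g`, the arrows `X' ⟶ X` and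
`X' ⟶ Y` are `s` and `s ≫ f = s ≫ g`, and arrows between two elements sent to `Y` go to `𝟙 Y`.
Going around the hexagon, the legs of a cocone at `{0,1,2}` and `{0,1,3}` are the same morphism
`t : Y ⟶ Y'`, and both `f ≫ t` and `g ≫ t` are the leg at `{0,1}`.
-/

open CategoryTheory

namespace CF2

universe v u

/-- The apex of the cocone is the value of the extension at the top element of `PPlus n`. -/
lemma exists_cocone {C : Type u} [Category.{v} C] {n : ℕ} {k : Fin (n + 1)} (F : Lam n k ⥤ C)
    (h : ∃ G : PPlus n ⥤ C, lamIncl n k ⋙ G = F) : Nonempty (Limits.Cocone F) := by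
  obtain ⟨G, rfl⟩ := h
  let top : PPlus n := ⟨Finset.univ, Finset.univ_nonempty⟩
  exact ⟨{
    pt := G.obj top
    ι :=
      { app := fun x => G.map (homOfLE (show x.1 ≤ top from Finset.subset_univ _))
        naturality := fun x y a => by
          dsimp
          rw [← G.map_comp, Category.comp_id]
          rfl } }⟩

/-- Names for the three objects `X'`, `X`, `Y` in the image of the diagram. -/
inductive Level
  | src
  | mid
  | tgt
  deriving DecidableEq

/-- The position of a level in the order `X'`, `X`, `Y`. -/
def Level.rank : Level → ℕ
  | src => 0
  | mid => 1
  | tgt => 2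

/-- The object to which a subset of `{0, 1, 2, 3}` is sent. -/
def level (s : Finset (Fin 4)) : Level :=
  if s = {0, 1} then .mid else if s = {0} ∨ s = {1} then .src else .tgt

lemma level_mono : ∀ s t : Finset (Fin 4), s.Nonempty → s ⊆ t →
    (level s).rank ≤ (level t).rank := by
  decide

/-- The choice between `f` and `g` does not change when a target of an arrow out of `{0,1}`
is enlarged: such a target is already maximal in the horn. -/
lemma mem_three_iff : ∀ s t : Finset (Fin 4), {0, 1} ⊆ s → s ⊆ t → t ≠ Finset.univ →
    level s = .tgt → (3 ∈ s ↔ 3 ∈ t) := by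
  decide

lemma eq_of_level_mid {s : Finset (Fin 4)} (hs : level s = .mid) : s = {0, 1} := by
  unfold level at hs
  split_ifs at hs
  assumption

variable {C : Type u} [Category.{v} C]

/-- The object of `C` named by a level. -/
def levelObj (X' X Y : C) : Level → C
  | .src => X'
  | .mid => X
  | .tgt => Y

/-- The morphism between the objects named by two levels; the flag `b` selects `g` instead of `f`
as the morphism from `X` to `Y`. -/
def levelMap {X' X Y : C} (f g : X ⟶ Y) (s : X' ⟶ X) (b : Bool) :
    (l m : Level) → l.rank ≤ m.rank → (levelObj X' X Y l ⟶ levelObj X' X Y m)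
  | .src, .src, _ => 𝟙 X'
  | .src, .mid, _ => s
  | .src, .tgt, _ => s ≫ f
  | .mid, .src, h => absurd h (by decide)
  | .mid, .mid, _ => 𝟙 X
  | .mid, .tgt, _ => if b then g else f
  | .tgt, .src, h => absurd h (by decide)
  | .tgt, .mid, h => absurd h (by decide)
  | .tgt, .tgt, _ => 𝟙 Y

lemma levelMap_self {X' X Y : C} (f g : X ⟶ Y) (s : X' ⟶ X) (b : Bool) (l : Level)
    (h : l.rank ≤ l.rank) : levelMap f g s b l l h = 𝟙 _ := by
  cases l <;> rfl

lemma levelMap_comp {X' X Y : C} (f g : X ⟶ Y) (s : X' ⟶ X) (w : s ≫ f = s ≫ g) (b c : Bool)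
    (l m p : Level) (h : l.rank ≤ m.rank) (h' : m.rank ≤ p.rank)
    (hbc : l = .mid → m = .tgt → b = c) :
    levelMap f g s b l m h ≫ levelMap f g s c m p h' =
      levelMap f g s c l p (h.trans h') := by
  cases l <;> cases m <;> cases p <;>
    first
      | exact absurd h (by decide)
      | exact absurd h' (by decide)
      | exact Category.id_comp _
      | exact Category.comp_id _
      | skip
  · cases c
    · rfl
    · exact w.symm
  · obtain rfl := hbc rfl rfl
    exact Category.comp_id _

/-- The diagram on `Lam 3 0` whose cocones coequalize `f` and `g`. -/
def diagram {X' X Y : C} (f g : X ⟶ Y) (s : X' ⟶ X) (w : s ≫ f = s ≫ g) : Lam 3 0 ⥤ C where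
  obj x := levelObj X' X Y (level x.1.1)
  map {x y} a := levelMap f g s (decide (3 ∈ y.1.1)) (level x.1.1) (level y.1.1)
    (level_mono _ _ x.1.2 (leOfHom a))
  map_id x := levelMap_self ..
  map_comp {x y z} a b := by
    refine (levelMap_comp f g s w _ _ _ _ _ _ _ fun hx hy => ?_).symm
    have hxy : x.1.1 ⊆ y.1.1 := leOfHom a
    rw [eq_of_level_mid hx] at hxy
    exact decide_eq_decide.2 (mem_three_iff _ _ hxy (leOfHom b) z.2.1 hy)

/-- A subset of `{0, 1, 2, 3}` as an element of the horn. -/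
abbrev vtx (s : Finset (Fin 4)) (h : s.Nonempty) (h₁ : s ≠ Finset.univ)
    (h₂ : s ≠ Finset.univ \ {0}) : Lam 3 0 :=
  ⟨⟨s, h⟩, h₁, h₂⟩

lemma coequalizes {X' X Y : C} (f g : X ⟶ Y) (s : X' ⟶ X) (w : s ≫ f = s ≫ g)
    (c : Limits.Cocone (diagram f g s w)) : ∃ (Y' : C) (t : Y ⟶ Y'), f ≫ t = g ≫ t := by
  let v01 := vtx {0, 1} (by decide) (by decide) (by decide)
  let v02 := vtx {0, 2} (by decide) (by decide) (by decide)
  let v03 := vtx {0, 3} (by decide) (by decide) (by decide)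
  let v012 := vtx {0, 1, 2} (by decide) (by decide) (by decide)
  let v013 := vtx {0, 1, 3} (by decide) (by decide) (by decide)
  let v023 := vtx {0, 2, 3} (by decide) (by decide) (by decide)
  let t012 : Y ⟶ c.pt := c.ι.app v012
  let t013 : Y ⟶ c.pt := c.ι.app v013
  let t023 : Y ⟶ c.pt := c.ι.app v023
  let t02 : Y ⟶ c.pt := c.ι.app v02
  let t03 : Y ⟶ c.pt := c.ι.app v03
  let t01 : X ⟶ c.pt := c.ι.app v01
  have e1 : f ≫ t012 = t01 := c.w (homOfLE (show v01.1.1 ⊆ v012.1.1 by decide))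
  have e2 : 𝟙 Y ≫ t012 = t02 := c.w (homOfLE (show v02.1.1 ⊆ v012.1.1 by decide))
  have e3 : 𝟙 Y ≫ t023 = t02 := c.w (homOfLE (show v02.1.1 ⊆ v023.1.1 by decide))
  have e4 : 𝟙 Y ≫ t023 = t03 := c.w (homOfLE (show v03.1.1 ⊆ v023.1.1 by decide))
  have e5 : 𝟙 Y ≫ t013 = t03 := c.w (homOfLE (show v03.1.1 ⊆ v013.1.1 by decide))
  have e6 : g ≫ t013 = t01 := c.w (homOfLE (show v01.1.1 ⊆ v013.1.1 by decide))
  rw [Category.id_comp] at e2 e3 e4 e5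
  refine ⟨c.pt, t012, ?_⟩
  have e : t012 = t013 := by rw [e2, ← e3, e4, ← e5]
  rw [e1, e, e6]

end CF2

/-- If every functor from a subdivided horn into `C` extends to the subdivided simplex
(i.e. `Ex N C` is a Kan complex), then `C` satisfies (CF2). -/
theorem cf2_of_extension {C : Type*} [Category C]
    (h : ∀ (n : ℕ), 1 ≤ n → ∀ (k : Fin (n+1)) (F : Lam n k ⥤ C),
        ∃ G : PPlus n ⥤ C, lamIncl n k ⋙ G = F) :
    ∀ ⦃X' X Y : C⦄ (f g : X ⟶ Y) (s : X' ⟶ X), s ≫ f = s ≫ g →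
      ∃ (Y' : C) (t : Y ⟶ Y'), f ≫ t = g ≫ t := by
  intro X' X Y f g s w
  obtain ⟨c⟩ := CF2.exists_cocone (CF2.diagram f g s w) (h 3 (by decide) 0 _)
  exact CF2.coequalizes f g s w c
end

section
/- Fix n ≥ 1 and let P be the full subposet of Ch(n) consisting of those chains none of whose entries equals {0, …, n} \ {n} = {0, …, n−1}. Then the inclusion P ↪ Ch(n) admits an order-preserving retraction, i.e., there is a monotone map r : Ch(n) → P that restricts to the identity on P. Explicitly, r fixes every chain in P, sends the chains ({0,…,n−1}) and ({0,…,n−1} ⊊ {0,…,n}) to the one-entry chain ({0,…,n}), and sends any chain of the form w₀ ⊊ ⋯ ⊊ w_l ⊊ {0,…,n−1} or w₀ ⊊ ⋯ ⊊ w_l ⊊ {0,…,n−1} ⊊ {0,…,n} to w₀ ⊊ ⋯ ⊊ w_l ⊊ {0,…,n}. -/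
/-!
Write `c = {0, …, n} \ {n}`. Replacing the entry `c` of a chain by the full set keeps it a chain,
because the full set is comparable with everything, and `c` is gone afterwards because `c` is
a proper subset. The replacement is monotone: in the one nontrivial case `A ⊆ B` with `c ∉ A`
and `c ∈ B`, the entries of `A` all survive the deletion of `c` from `B`.
-/

open CategoryTheory

/-- `Chain2 n` is the poset of nonempty chains of nonempty subsets of `{0, …, n}`
(a chain being recorded as its finite set of entries, totally ordered by inclusion),
ordered by containment of the sets of entries; this is `c Sd² Δ[n]`. -/
abbrev Chain2 (n : ℕ) :=
  {A : Finset (Finset (Fin (n+1))) //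
    A.Nonempty ∧ (∀ s ∈ A, s.Nonempty) ∧
      IsChain (· ⊆ ·) (A : Set (Finset (Fin (n+1))))}

/-- `PSub n` is the full subposet of `Chain2 n` consisting of chains none of whose entries
equals `{0, …, n} \ {n}`. -/
abbrev PSub (n : ℕ) :=
  {A : Chain2 n // (Finset.univ \ {Fin.last n} : Finset (Fin (n+1))) ∉ A.1}

/-- The inclusion `PSub n ↪ Chain2 n` admits a monotone retraction, given explicitly by
fixing every chain of `PSub n` and, on a chain containing the entry `{0,…,n} \ {n}`,
deleting this entry and adding the entry `{0, …, n}`. -/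
theorem psub_retraction (n : ℕ) (hn : 1 ≤ n) :
    ∃ r : Chain2 n → PSub n, Monotone r ∧ (∀ x : PSub n, r x.1 = x) ∧
      ∀ A : Chain2 n, ((r A).1.1 : Finset (Finset (Fin (n+1)))) =
        if (Finset.univ \ {Fin.last n} : Finset (Fin (n+1))) ∈ A.1 then
          insert (Finset.univ : Finset (Fin (n+1)))
            (A.1.erase (Finset.univ \ {Fin.last n}))
        else A.1 := by
  have hc : (Finset.univ \ {Fin.last n} : Finset (Fin (n+1))) ≠ Finset.univ := by
    intro h
    have := h ▸ Finset.mem_univ (Fin.last n)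
    simp at this
  unfold PSub
  generalize (Finset.univ \ {Fin.last n} : Finset (Fin (n+1))) = c at hc ⊢
  let f : Finset (Finset (Fin (n+1))) → Finset (Finset (Fin (n+1))) := fun A =>
    if c ∈ A then insert Finset.univ (A.erase c) else A
  have hfc : ∀ A, c ∉ f A := by
    intro A
    by_cases h : c ∈ A <;> simp [f, h, hc]
  have hfmono : ∀ A B, A ⊆ B → f A ⊆ f B := by
    intro A B hAB
    by_cases hA : c ∈ A
    · simp only [f, hA, hAB hA, if_true]
      exact Finset.insert_subset_insert _ (Finset.erase_subset_erase _ hAB)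
    · by_cases hB : c ∈ B
      -- As `c ∉ A`, erasing `c` from `B` keeps every entry of `A`.
      · simp only [f, hA, hB, if_true, if_false]
        exact (Finset.subset_erase.2 ⟨hAB, hA⟩).trans (Finset.subset_insert _ _)
      · simpa only [f, hA, hB, if_false] using hAB
  have hfchain : ∀ A : Chain2 n, (f A.1).Nonempty ∧ (∀ s ∈ f A.1, s.Nonempty) ∧
      IsChain (· ⊆ ·) (f A.1 : Set (Finset (Fin (n+1)))) := by
    rintro ⟨A, hne, hs, hch⟩
    by_cases h : c ∈ A
    · simp only [f, h, if_true]
      refine ⟨Finset.insert_nonempty _ _, ?_, ?_⟩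
      · intro s hsA
        rcases Finset.mem_insert.1 hsA with rfl | hsA
        · exact Finset.univ_nonempty
        · exact hs s (Finset.mem_of_mem_erase hsA)
      · rw [Finset.coe_insert]
        refine (hch.mono (Finset.coe_subset.2 (Finset.erase_subset c A))).insert ?_
        intro b _ _
        exact Or.inr (Finset.subset_univ b)
    · simp only [f, h, if_false]
      exact ⟨hne, hs, hch⟩
  refine ⟨fun A => ⟨⟨f A.1, hfchain A⟩, hfc A.1⟩, fun A B hAB => hfmono A.1 B.1 hAB, ?_,
    fun A => rfl⟩
  intro x
  apply Subtype.ext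
  apply Subtype.ext
  exact if_neg x.2
end

section
/- For a category D, the following two conditions are equivalent: (i) for every n ≥ 1 and every 0 ≤ i ≤ n, every functor ChΛ(n,i) → D extends along the inclusion to a functor Ch(n) → D (i.e., D has the right lifting property against all horn inclusions c Sd² Λ^i[n] → c Sd² Δ[n], so Ex² N D is a Kan complex); (ii) for every n ≥ 1, every functor ChΛ(n,n) → D extends along the inclusion to a functor P(n) → D, where P(n) is the full subposet of Ch(n) consisting of chains none of whose entries equals {0, …, n} \ {n} (the subposet P(n) is isomorphic to the partial cone K(c Sd² Λ^n[n])). -/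
open CategoryTheory

/-- `ChLam n k` is the full subposet of `Chain2 n` consisting of chains none of whose
entries equals `{0, …, n}` or `{0, …, n} \ {k}`; this is `c Sd² Λ^k[n]`. -/
abbrev ChLam (n : ℕ) (k : Fin (n+1)) :=
  {A : Chain2 n // ∀ s ∈ A.1, s ≠ Finset.univ ∧ s ≠ Finset.univ \ {k}}

/-- The inclusion of the doubly subdivided horn into the doubly subdivided simplex. -/
def chLamIncl (n : ℕ) (k : Fin (n+1)) : ChLam n k ⥤ Chain2 n :=
  Monotone.functor (f := fun x => x.1) (fun _ _ h => h)

/-- The inclusion of the doubly subdivided horn `ChLam n n` into `PSub n`. -/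
def chLamInclP (n : ℕ) : ChLam n (Fin.last n) ⥤ PSub n :=
  Monotone.functor
    (f := fun x => ⟨x.1, fun hmem => (x.2 _ hmem).2 rfl⟩) (fun _ _ h => h)

/-- The map on chains induced entrywise by a monotone self-map `φ` of the power set which
preserves nonemptiness. -/
def mapChain {n : ℕ} (φ : Finset (Fin (n+1)) → Finset (Fin (n+1))) (hφ : Monotone φ)
    (hne : ∀ s, s.Nonempty → (φ s).Nonempty) (A : Chain2 n) : Chain2 n :=
  ⟨A.1.image φ, A.2.1.image φ, by
    intro s hs
    obtain ⟨t, ht, rfl⟩ := Finset.mem_image.1 hs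
    exact hne t (A.2.2.1 t ht), by
    intro s hs t ht _
    obtain ⟨s', hs', rfl⟩ := Finset.mem_image.1 hs
    obtain ⟨t', ht', rfl⟩ := Finset.mem_image.1 ht
    exact (A.2.2.2.total hs' ht').imp (fun h => hφ h) (fun h => hφ h)⟩

lemma mapChain_mono {n : ℕ} (φ : Finset (Fin (n+1)) → Finset (Fin (n+1))) (hφ : Monotone φ)
    (hne : ∀ s, s.Nonempty → (φ s).Nonempty) : Monotone (mapChain φ hφ hne) :=
  fun _ _ h => Finset.image_subset_image h

/-- The self-map of the power set sending `{0, …, n} \ {n}` to `{0, …, n}` and fixing every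
other subset. -/
def fill (n : ℕ) (s : Finset (Fin (n+1))) : Finset (Fin (n+1)) :=
  if s = Finset.univ \ {Fin.last n} then Finset.univ else s

lemma subset_fill (n : ℕ) (s : Finset (Fin (n+1))) : s ⊆ fill n s := by
  unfold fill
  split_ifs
  · exact Finset.subset_univ s
  · exact Finset.Subset.refl s

lemma fill_ne (n : ℕ) (s : Finset (Fin (n+1))) : fill n s ≠ Finset.univ \ {Fin.last n} := by
  unfold fill
  split_ifs with h
  · intro h'
    have := Finset.mem_univ (Fin.last n)
    rw [h'] at this
    simp at this
  · exact h

/-- Monotonicity holds because `{0, …, n} \ {n}` is a coatom. -/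
lemma fill_mono (n : ℕ) : Monotone (fill n) := by
  intro s t hst
  by_cases hs : s = Finset.univ \ {Fin.last n}
  · suffices h : fill n t = Finset.univ by
      rw [h]; exact Finset.subset_univ _
    by_cases ht : t = Finset.univ \ {Fin.last n}
    · simp [fill, ht]
    · rw [fill, if_neg ht]
      by_contra hne
      apply ht
      refine Finset.Subset.antisymm ?_ (hs ▸ hst)
      intro x hx
      simp only [Finset.mem_sdiff, Finset.mem_univ, Finset.mem_singleton, true_and]
      rintro rfl
      apply hne
      refine Finset.eq_univ_of_forall fun y => ?_
      by_cases hy : y = Fin.last n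
      · exact hy ▸ hx
      · exact hst (by simp [hs, hy])
  · have h : fill n s = s := if_neg hs
    rw [h]
    exact hst.trans (subset_fill n t)

/-- The retraction of `Chain2 n` onto `PSub n` replacing an entry `{0, …, n} \ {n}` by
`{0, …, n}`. -/
def retr (n : ℕ) : Chain2 n ⥤ PSub n :=
  Monotone.functor
    (f := fun A => ⟨mapChain (fill n) (fill_mono n) (fun s hs => hs.mono (subset_fill n s)) A,
      fun hmem => by
        obtain ⟨s, _, hs⟩ := Finset.mem_image.1 hmem
        exact fill_ne n s hs⟩)
    (fun _ _ h => mapChain_mono (fill n) (fill_mono n) (fun s hs => hs.mono (subset_fill n s)) h)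

/-- The action on chains of the transposition of `a` and `b`. -/
def swapChain {n : ℕ} (a b : Fin (n+1)) : Chain2 n ⥤ Chain2 n :=
  Monotone.functor
    (mapChain_mono (fun s => s.image (Equiv.swap a b)) (fun _ _ h => Finset.image_subset_image h)
      (fun _ hs => hs.image _))

/-- The transposition of `a` and `b` carries the horn opposite `a` to the horn opposite `b`. -/
def swapHorn {n : ℕ} (a b : Fin (n+1)) : ChLam n a ⥤ ChLam n b :=
  Monotone.functor
    (f := fun A => ⟨(swapChain a b).obj A.1, by
      intro s hs
      obtain ⟨t, ht, rfl⟩ := Finset.mem_image.1 hs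
      have hinj := Finset.image_injective (Equiv.swap a b).injective
      refine ⟨fun h => (A.2 t ht).1 (hinj ?_), fun h => (A.2 t ht).2 (hinj ?_)⟩
      · simpa [Finset.image_univ_equiv] using h
      · simpa [Finset.image_sdiff _ _ (Equiv.swap a b).injective,
          Finset.image_univ_equiv] using h⟩)
    (fun _ _ h => (swapChain a b).monotone h)

lemma functor_eq_of_obj {P Q : Type*} [Preorder P] [PartialOrder Q] {F G : P ⥤ Q}
    (h : ∀ x, F.obj x = G.obj x) : F = G :=
  CategoryTheory.Functor.ext h (fun _ _ _ => Subsingleton.elim _ _)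

lemma swapHorn_comp {n : ℕ} (a b : Fin (n+1)) : swapHorn a b ⋙ swapHorn b a = 𝟭 _ := by
  apply functor_eq_of_obj
  intro A
  apply Subtype.ext
  apply Subtype.ext
  change (A.1.1.image fun s => s.image (Equiv.swap a b)).image
    (fun s => s.image (Equiv.swap b a)) = A.1.1
  rw [Finset.image_image, Equiv.swap_comm b a]
  rw [Finset.image_congr (g := id), Finset.image_id]
  intro s _
  simp [Finset.image_image, Function.comp_def]

/-- After the transposition a chain of the horn lies in `ChLam n n`, hence avoids
`{0, …, n} \ {n}` and is fixed by the retraction. -/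
lemma chLamIncl_retr (n : ℕ) (k : Fin (n+1)) :
    chLamIncl n k ⋙ swapChain k (Fin.last n) ⋙ retr n
      = swapHorn k (Fin.last n) ⋙ chLamInclP n := by
  apply functor_eq_of_obj
  intro A
  apply Subtype.ext
  apply Subtype.ext
  change (((swapHorn k (Fin.last n)).obj A).1.1).image (fill n)
    = ((swapHorn k (Fin.last n)).obj A).1.1
  generalize (swapHorn k (Fin.last n)).obj A = B
  rw [Finset.image_congr (f := fill n) (g := id) fun s hs => if_neg (B.2 s hs).2, Finset.image_id]

/-- A category `D` has the extension property against all doubly subdivided horn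
inclusions `c Sd² Λ^i[n] → c Sd² Δ[n]` (i.e. `Ex² N D` is a Kan complex) if and only if it
has the extension property against the inclusions `c Sd² Λ^n[n] → K(c Sd² Λ^n[n])`. -/
theorem extension_iff_partialCone_extension (D : Type*) [Category D] :
    (∀ (n : ℕ), 1 ≤ n → ∀ (k : Fin (n+1)) (F : ChLam n k ⥤ D),
        ∃ G : Chain2 n ⥤ D, chLamIncl n k ⋙ G = F) ↔
    (∀ (n : ℕ), 1 ≤ n → ∀ (F : ChLam n (Fin.last n) ⥤ D),
        ∃ G : PSub n ⥤ D, chLamInclP n ⋙ G = F) := by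
  constructor
  · intro H n hn F
    obtain ⟨G, rfl⟩ := H n hn (Fin.last n) F
    exact ⟨Monotone.functor (f := fun x : PSub n => x.1) (fun _ _ h => h) ⋙ G, rfl⟩
  · intro H n hn k F
    obtain ⟨G, hG⟩ := H n hn (swapHorn (Fin.last n) k ⋙ F)
    refine ⟨swapChain k (Fin.last n) ⋙ retr n ⋙ G, ?_⟩
    calc chLamIncl n k ⋙ swapChain k (Fin.last n) ⋙ retr n ⋙ G
        = (chLamIncl n k ⋙ swapChain k (Fin.last n) ⋙ retr n) ⋙ G := rfl
      _ = swapHorn k (Fin.last n) ⋙ (chLamInclP n ⋙ G) := by rw [chLamIncl_retr]; rfl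
      _ = (swapHorn k (Fin.last n) ⋙ swapHorn (Fin.last n) k) ⋙ F := by rw [hG]; rfl
      _ = F := by rw [swapHorn_comp]; rfl
end

section
/- Let W be a category possessing all pushouts. Suppose given morphisms α : A ⟶ X and f, g : X ⟶ Y with f ∘ α = g ∘ α. Then the parallel pair f, g : X ⟶ Y has a coequalizer in W. -/
/-!
Let `P = X ⊔_A X` be the pushout of `α` along itself. Since `α ≫ f = α ≫ g`, there is a map
`(f, g) : P ⟶ Y`, besides the fold map `∇ : P ⟶ X`. The pushout of `∇` and `(f, g)` is the
coequalizer of `f` and `g`: a cocone on this span is a pair `u : X ⟶ Z`, `v : Y ⟶ Z` with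
`u = f ≫ v` and `u = g ≫ v`, that is, a map `v` with `f ≫ v = g ≫ v`.
-/

open CategoryTheory

/-- In a category with all pushouts, a parallel pair `f, g : X ⟶ Y` which is equalized by
precomposition with some morphism `α : A ⟶ X` has a coequalizer. -/
theorem hasCoequalizer_of_hasPushouts {W : Type*} [Category W] [Limits.HasPushouts W]
    {A X Y : W} (α : A ⟶ X) (f g : X ⟶ Y) (h : α ≫ f = α ≫ g) :
    Limits.HasCoequalizer f g := by
  let fold : Limits.pushout α α ⟶ X := Limits.pushout.desc (𝟙 X) (𝟙 X) rfl
  let fg : Limits.pushout α α ⟶ Y := Limits.pushout.desc f g h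
  have hf : Limits.pushout.inl fold fg = f ≫ Limits.pushout.inr fold fg := by
    simpa [fold, fg, Limits.pushout.inl_desc_assoc, Limits.pushout.inr_desc_assoc] using
      congrArg (Limits.pushout.inl α α ≫ ·) (Limits.pushout.condition (f := fold) (g := fg))
  have hg : Limits.pushout.inl fold fg = g ≫ Limits.pushout.inr fold fg := by
    simpa [fold, fg, Limits.pushout.inl_desc_assoc, Limits.pushout.inr_desc_assoc] using
      congrArg (Limits.pushout.inr α α ≫ ·) (Limits.pushout.condition (f := fold) (g := fg))
  have hs : ∀ s : Limits.Cofork f g, fold ≫ f ≫ s.π = fg ≫ s.π := by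
    intro s
    apply Limits.pushout.hom_ext
    · simp [fold, fg, Limits.pushout.inl_desc_assoc]
    · simp [fold, fg, Limits.pushout.inr_desc_assoc, s.condition]
  refine Limits.HasColimit.mk
    ⟨Limits.Cofork.ofπ (Limits.pushout.inr fold fg) (hf.symm.trans hg),
      Limits.Cofork.IsColimit.mk _ (fun s => Limits.pushout.desc (f ≫ s.π) s.π (hs s)) ?_ ?_⟩
  · intro s
    exact Limits.pushout.inr_desc _ _ _
  · intro s m hm
    replace hm : Limits.pushout.inr fold fg ≫ m = s.π := hm
    apply Limits.pushout.hom_ext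
    · rw [Limits.pushout.inl_desc, ← hm, ← Category.assoc, ← hf]
    · rw [Limits.pushout.inr_desc, ← hm]
end

section
/- In the category FI of finite sets and injective functions, the span consisting of the inclusion {1} ↪ {1,2} and the inclusion {1} ↪ {0,1} has no pushout. (Its pushout in the category of sets is not a pushout in FI, and no other object serves as a pushout either.) -/
/-!
The span has two competing cocones. In one, `{0,1,2}`, the points `2` and `0` have different
images; in the other, a two-element set, they have the same image away from that of `1`. A map
from a pushout to the first cocone forces `2` and `0` to have different images in the pushout,
while a map to the second, being injective, forces their images to be equal.
-/

open CategoryTheory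

/-- An object of the category `FI`: a finite type. -/
structure FI : Type 1 where
  /-- the underlying type -/
  α : Type
  [str : Fintype α]

attribute [instance] FI.str

instance : CoeSort FI Type :=
  ⟨FI.α⟩

/-- The category of finite sets and injective functions. -/
instance : Category FI where
  Hom X Y := {f : X → Y // Function.Injective f}
  id X := ⟨id, fun _ _ h => h⟩
  comp f g := ⟨g.1 ∘ f.1, g.2.comp f.2⟩
  id_comp := by intros; rfl
  comp_id := by intros; rfl
  assoc := by intros; rfl

/-- The finite set `{1}`. -/
abbrev setA : Type := {x : ℕ // x ∈ ({1} : Finset ℕ)}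

/-- The finite set `{1,2}`. -/
abbrev setB : Type := {x : ℕ // x ∈ ({1, 2} : Finset ℕ)}

/-- The finite set `{0,1}`. -/
abbrev setC : Type := {x : ℕ // x ∈ ({0, 1} : Finset ℕ)}

/-- The object `{1}` of `FI`. -/
def A1 : FI := ⟨setA⟩

/-- The object `{1,2}` of `FI`. -/
def B12 : FI := ⟨setB⟩

/-- The object `{0,1}` of `FI`. -/
def B01 : FI := ⟨setC⟩

/-- The inclusion `{1} ↪ {1,2}`. -/
def incl12 : A1 ⟶ B12 :=
  ⟨fun (a : setA) =>
    (⟨a.1, by have := a.2; simp only [Finset.mem_singleton] at this; simp [this]⟩ : setB),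
    fun (a b : setA) _ => Subtype.ext (by
      have ha := a.2; have hb := b.2
      simp only [Finset.mem_singleton] at ha hb; rw [ha, hb])⟩

/-- The inclusion `{1} ↪ {0,1}`. -/
def incl01 : A1 ⟶ B01 :=
  ⟨fun (a : setA) =>
    (⟨a.1, by have := a.2; simp only [Finset.mem_singleton] at this; simp [this]⟩ : setC),
    fun (a b : setA) _ => Subtype.ext (by
      have ha := a.2; have hb := b.2
      simp only [Finset.mem_singleton] at ha hb; rw [ha, hb])⟩

/-- The function `{1,2} → {0,1,2}` keeping `2` apart from `0`. -/
def sepB : B12 ⟶ (⟨Fin 3⟩ : FI) :=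
  ⟨fun (x : setB) => Fin.ofNat 3 x.1, show Function.Injective (fun x : setB => Fin.ofNat 3 x.1) by
    decide⟩

/-- The function `{0,1} → {0,1,2}` keeping `0` apart from `2`. -/
def sepC : B01 ⟶ (⟨Fin 3⟩ : FI) :=
  ⟨fun (x : setC) => Fin.ofNat 3 x.1, show Function.Injective (fun x : setC => Fin.ofNat 3 x.1) by
    decide⟩

/-- The bijection from `{1,2}` to a two-element set, with `1 ↦ true`. -/
def glueB : B12 ⟶ (⟨Bool⟩ : FI) :=
  ⟨fun (x : setB) => decide (x.1 = 1),
    show Function.Injective (fun x : setB => decide (x.1 = 1)) by decide⟩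

/-- The bijection from `{0,1}` to a two-element set, with `1 ↦ true`. -/
def glueC : B01 ⟶ (⟨Bool⟩ : FI) :=
  ⟨fun (x : setC) => decide (x.1 = 1),
    show Function.Injective (fun x : setC => decide (x.1 = 1)) by decide⟩

/-- In the category `FI` of finite sets and injections, the span consisting of the
inclusions `{1} ↪ {1,2}` and `{1} ↪ {0,1}` has no pushout. -/
theorem fi_span_no_pushout : ¬ Limits.HasPushout incl12 incl01 := by
  intro h
  let b : B12 := (⟨2, by decide⟩ : setB)
  let c : B01 := (⟨0, by decide⟩ : setC)
  let i := Limits.pushout.inl incl12 incl01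
  let j := Limits.pushout.inr incl12 incl01
  have hsep : incl12 ≫ sepB = incl01 ≫ sepC := rfl
  have hglue : incl12 ≫ glueB = incl01 ≫ glueC := rfl
  have hb : i ≫ Limits.pushout.desc glueB glueC hglue = glueB := Limits.pushout.inl_desc _ _ _
  have hc : j ≫ Limits.pushout.desc glueB glueC hglue = glueC := Limits.pushout.inr_desc _ _ _
  have hb' : i ≫ Limits.pushout.desc sepB sepC hsep = sepB := Limits.pushout.inl_desc _ _ _
  have hc' : j ≫ Limits.pushout.desc sepB sepC hsep = sepC := Limits.pushout.inr_desc _ _ _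
  -- Both points go to `false` in the glued cocone, so injectivity identifies them in the pushout.
  have heq : i.1 b = j.1 c := by
    apply (Limits.pushout.desc glueB glueC hglue).2
    exact (congrFun (congrArg Subtype.val hb) b).trans
      (congrFun (congrArg Subtype.val hc) c).symm
  have himage : sepB.1 b = sepC.1 c :=
    (congrFun (congrArg Subtype.val hb') b).symm.trans
      ((congrArg (Limits.pushout.desc sepB sepC hsep).1 heq).trans
        (congrFun (congrArg Subtype.val hc') c))
  exact absurd (show (2 : Fin 3) = 0 from himage) (by decide)
end

section
/- It is not the case that for every n ≥ 1 and every 0 ≤ k ≤ n every functor Λ(n,k) → FI extends along the inclusion to a functor P₊(n) → FI; that is, Ex N(FI) is not a Kan complex. In fact, there is a functor Λ(3,0) → FI that admits no extension to P₊(3). -/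
/-!
An extension of `F : Λ(3,0) ⥤ FI` to `P₊(3)` restricts to a cocone on `F` consisting of injections
into the value at `{0,1,2,3}`. It therefore suffices to find a diagram `F` whose cocones must
identify two points of one of its sets.

The three pairs `01, 02, 03` and the three triples `012, 013, 023` form a loop
`012 ← 02 → 023 ← 03 → 013 ← 01 → 012` around the vertex `0`. Let `F` be a two-element set on each
of these six subsets and empty on all others, with all maps along the loop the identity except
`01 → 012`, which is the swap. The monodromy around the loop is then the swap, so every cocone
identifies the two points of `F(012)`. Since `F({0})` is empty, the fact that the loop bounds in
the horn imposes no constraint on this monodromy.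
-/

open CategoryTheory

/-- The subsets carrying two points: those containing `0` and at least one other element. -/
def loopSet (s : Finset (Fin 4)) : Prop := 0 ∈ s ∧ 2 ≤ s.card

instance : DecidablePred loopSet := fun _ => inferInstanceAs (Decidable (_ ∧ _))

/-- The `ℤ/2`-valued transition cocycle of the diagram: nontrivial only on `01 → 012`. -/
def twist (s t : Finset (Fin 4)) : Bool := decide (s = {0, 1} ∧ t = {0, 1, 2})

lemma loopSet_mono {s t : Finset (Fin 4)} (h : s ⊆ t) (hs : loopSet s) : loopSet t :=
  ⟨h hs.1, hs.2.trans (Finset.card_le_card h)⟩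

lemma twist_self (s : Finset (Fin 4)) : twist s s = false := by
  revert s; decide

/-- The cocycle identity. It holds because in a chain `s ⊆ t ⊆ u` of proper subsets with at least
two elements each, one of the two inclusions is an equality. -/
lemma twist_comp {s t u : Finset (Fin 4)} (hs : loopSet s) (hst : s ⊆ t) (htu : t ⊆ u)
    (hu : u ≠ Finset.univ) : twist s u = xor (twist s t) (twist t u) := by
  by_cases h1 : s = t
  · subst h1; simp [twist_self]
  by_cases h2 : t = u
  · subst h2; simp [twist_self]
  have c1 := Finset.card_lt_card (hst.ssubset_of_ne h1)
  have c2 := Finset.card_lt_card (htu.ssubset_of_ne h2)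
  have c3 := Finset.card_lt_card ((Finset.subset_univ u).ssubset_of_ne hu)
  have c4 := hs.2
  simp at c3
  omega

/-- The diagram on the horn: two points on each subset satisfying `loopSet`, empty elsewhere, with
transition maps given by `twist`. -/
def twisted : Lam 3 (0 : Fin 4) ⥤ FI where
  obj x := ⟨{_b : Bool // loopSet x.1.1}⟩
  map {x y} f := ⟨fun b => ⟨xor b.1 (twist x.1.1 y.1.1), loopSet_mono (leOfHom f) b.2⟩,
    fun a b h => Subtype.ext (by simpa using congrArg Subtype.val h)⟩
  map_id x := Subtype.ext (funext fun b => Subtype.ext (by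
    change xor b.1 (twist x.1.1 x.1.1) = b.1
    simp [twist_self]))
  map_comp {x y z} f g := Subtype.ext (funext fun b => Subtype.ext (by
    change xor b.1 (twist x.1.1 z.1.1) = xor (xor b.1 (twist x.1.1 y.1.1)) (twist y.1.1 z.1.1)
    rw [twist_comp b.2 (leOfHom f) (leOfHom g) z.2.1, Bool.xor_assoc]))

theorem twisted_no_extension :
    ¬ ∃ G : PPlus 3 ⥤ FI, lamIncl 3 (0 : Fin 4) ⋙ G = twisted := by
  rintro ⟨G, hG⟩
  let top : PPlus 3 := ⟨Finset.univ, Finset.univ_nonempty⟩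
  -- The cocone of injections into the value of `G` at the top element.
  let c : ∀ x : Lam 3 (0 : Fin 4), twisted.obj x ⟶ G.obj top := fun x =>
    (eqToHom hG.symm).app x ≫ G.map (homOfLE (Finset.subset_univ x.1.1) : x.1 ⟶ top)
  have nat : ∀ {x y : Lam 3 (0 : Fin 4)} (f : x ⟶ y), twisted.map f ≫ c y = c x := by
    intro x y f
    simp only [c, NatTrans.naturality_assoc, Functor.comp_map]
    exact congrArg ((eqToHom hG.symm).app x ≫ ·) (G.map_comp ((lamIncl 3 0).map f) _).symm
  let q : ∀ s : Finset (Fin 4), loopSet s → s ≠ Finset.univ → Lam 3 (0 : Fin 4) :=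
    fun s hs hu => ⟨⟨s, ⟨0, hs.1⟩⟩, hu, fun h => by
      have h0 := hs.1
      dsimp only at h
      rw [h] at h0
      simp at h0⟩
  -- The leg of the cocone at `s`, evaluated at the point `b`.
  let p : ∀ s : Finset (Fin 4), loopSet s → s ≠ Finset.univ → Bool → G.obj top :=
    fun s hs hu b => (c (q s hs hu)).1 ⟨b, hs⟩
  have hp : ∀ (s t : Finset (Fin 4)) (hs : loopSet s) (ht : loopSet t) (hsu : s ≠ Finset.univ)
      (htu : t ≠ Finset.univ) (_ : s ⊆ t) (b : Bool),
      p t ht htu (xor b (twist s t)) = p s hs hsu b := by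
    intro s t hs ht hsu htu hst b
    exact congrFun (congrArg Subtype.val (nat (homOfLE hst : q s hs hsu ⟶ q t ht htu))) ⟨b, hs⟩
  have h1 := hp {0, 1} {0, 1, 2} (by decide) (by decide) (by decide) (by decide) (by decide) true
  have h2 := hp {0, 1} {0, 1, 3} (by decide) (by decide) (by decide) (by decide) (by decide) true
  have h3 := hp {0, 3} {0, 1, 3} (by decide) (by decide) (by decide) (by decide) (by decide) true
  have h4 := hp {0, 3} {0, 2, 3} (by decide) (by decide) (by decide) (by decide) (by decide) true
  have h5 := hp {0, 2} {0, 2, 3} (by decide) (by decide) (by decide) (by decide) (by decide) true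
  have h6 := hp {0, 2} {0, 1, 2} (by decide) (by decide) (by decide) (by decide) (by decide) true
  have t1 : xor true (twist {0, 1} {0, 1, 2}) = false := by decide
  have t2 : xor true (twist {0, 1} {0, 1, 3}) = true := by decide
  have t3 : xor true (twist {0, 3} {0, 1, 3}) = true := by decide
  have t4 : xor true (twist {0, 3} {0, 2, 3}) = true := by decide
  have t5 : xor true (twist {0, 2} {0, 2, 3}) = true := by decide
  have t6 : xor true (twist {0, 2} {0, 1, 2}) = true := by decide
  rw [t1] at h1
  rw [t2] at h2
  rw [t3] at h3
  rw [t4] at h4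
  rw [t5] at h5
  rw [t6] at h6
  have key := h1.trans (h2.symm.trans (h3.trans (h4.symm.trans (h5.trans h6.symm))))
  have inj := (c _).2 key
  exact absurd (congrArg Subtype.val inj) (by decide)

/-- `Ex N FI` is not a Kan complex: the horn-extension property fails for `FI`; in fact,
some functor `c Sd Λ⁰[3] → FI` admits no extension to `c Sd Δ[3]`. -/
theorem fi_extension_fails :
    (¬ ∀ (n : ℕ), 1 ≤ n → ∀ (k : Fin (n+1)) (F : Lam n k ⥤ FI),
        ∃ G : PPlus n ⥤ FI, lamIncl n k ⋙ G = F) ∧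
    (∃ F : Lam 3 (0 : Fin 4) ⥤ FI,
        ¬ ∃ G : PPlus 3 ⥤ FI, lamIncl 3 (0 : Fin 4) ⋙ G = F) := by
  exact ⟨fun h => twisted_no_extension (h 3 (by norm_num) 0 twisted),
    twisted, twisted_no_extension⟩
end

section
/- Let C be a category possessing all pullbacks. Then for every n ≥ 1 and every 0 ≤ k ≤ n, every functor ChΛ(n,k) → C extends along the inclusion to a functor Ch(n) → C. (Equivalently, C has the right lifting property against all inclusions c Sd² Λ^k[n] → c Sd² Δ[n], i.e., Ex² N C is a Kan complex and C is fibrant in the Thomason model structure; this is the instance of the Main Theorem for the partial model category (C, C) with cofibrations the identities and fibrations all morphisms.) -/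
/-!
The horn poset `ChLam n k` is the poset of simplices of the order complex of
`Q = {s ⊆ {0, …, n} | s ≠ ∅, s ≠ univ, s ≠ univ \ {k}}`.  Deleting the entries `univ` and
`univ \ {k}` from a chain gives a monotone retraction of `Chain2 n` onto `ChLam n k`, defined
except where nothing is left over.  Hence `F` extends to `Chain2 n` as soon as `F` admits a
cone `X`: send a chain to `F` of what is left over, or to `X` if nothing is left (`retract`,
`coneExtend`).

The cone is obtained as a limit of `F`, built from pullbacks only.  Call an up-set `U` of
`ChLam n k` good (`HasLimitOn`) if the restriction of `F` to `U` has a limit.  Principal up-sets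
are good, and if `U`, `V` and `U ∩ V` are good then so is `U ∪ V`, its limit being a pullback
(`HasLimitOn.union`).  The up-sets used are `chainStar τ W`, the chains containing `τ` and meeting
`W`.  Adding a vertex `v` to `W` adds the principal up-set of `insert v τ`, which meets
`chainStar τ W` in `chainStar (insert v τ) W`; by induction `chainStar τ W` is good whenever `W`
contains a cone point `c`, that is, a vertex which can be added to every relevant chain
(`hasLimitOn_star`).

The horn is conically contractible via `s ⊆ s ∪ {k} ⊇ {k}`.  Accordingly, the star of the sets
containing `k` is good with cone point `{k}`.  The sets `v` not containing `k` are then added in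
order of increasing cardinality.  When `v` is added, the sets already present and comparable
with `v` are subsets of `v` or contain `v ∪ {k}`, so `v ∪ {k}` is a cone point of the link of
`v`, and goodness persists until all of `ChLam n k` is covered.
-/

open CategoryTheory

/-! ### Limits over up-sets of a preorder -/

section Limits

variable {P : Type*} [Preorder P] {C : Type*} [Category C]

/-- `p` is a cone over the restriction of `F` to the subset `U` of `P`, with apex `X`. -/
def IsConeOn (F : P ⥤ C) (U : Set P) (X : C) (p : ∀ x ∈ U, X ⟶ F.obj x) : Prop :=
  ∀ x y (hx : x ∈ U) (hy : y ∈ U) (h : x ≤ y), p x hx ≫ F.map (homOfLE h) = p y hy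

/-- The restriction of `F` to the subset `U` of `P` has a limit. -/
def HasLimitOn (F : P ⥤ C) (U : Set P) : Prop :=
  ∃ (X : C) (p : ∀ x ∈ U, X ⟶ F.obj x), IsConeOn F U X p ∧
    ∀ (Y : C) (q : ∀ x ∈ U, Y ⟶ F.obj x), IsConeOn F U Y q →
      ∃! f : Y ⟶ X, ∀ x hx, f ≫ p x hx = q x hx

lemma hasLimitOn_Ici (F : P ⥤ C) (a : P) : HasLimitOn F (Set.Ici a) := by
  refine ⟨F.obj a, fun x hx => F.map (homOfLE hx), ?_, ?_⟩
  · intro x y hx hy h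
    rw [← F.map_comp]
    rfl
  · intro Y q hq
    refine ⟨q a le_rfl, fun x hx => hq a x le_rfl hx hx, ?_⟩
    intro f hf
    rw [← hf a le_rfl]
    simp

/-- The limit over a union of two up-sets is the pullback of the limits over the two parts,
taken over the limit on their intersection. -/
lemma HasLimitOn.union [Limits.HasPullbacks C] {F : P ⥤ C} {U V : Set P}
    (hUup : IsUpperSet U) (hVup : IsUpperSet V) (hU : HasLimitOn F U) (hV : HasLimitOn F V)
    (hUV : HasLimitOn F (U ∩ V)) : HasLimitOn F (U ∪ V) := by
  classical
  obtain ⟨X, p, hp, hpu⟩ := hU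
  obtain ⟨Y, q, hq, hqu⟩ := hV
  obtain ⟨Z, r, hr, hru⟩ := hUV
  obtain ⟨f, hf, -⟩ := hru X (fun x hx => p x hx.1) (fun x y hx hy h => hp x y hx.1 hy.1 h)
  obtain ⟨g, hg, -⟩ := hru Y (fun x hx => q x hx.2) (fun x y hx hy h => hq x y hx.2 hy.2 h)
  have agree : ∀ x (hx : x ∈ U) (hx' : x ∈ V),
      Limits.pullback.fst f g ≫ p x hx = Limits.pullback.snd f g ≫ q x hx' := by
    intro x hx hx'
    have h1 := hf x ⟨hx, hx'⟩
    have h2 := hg x ⟨hx, hx'⟩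
    rw [← h1, ← h2, ← Category.assoc, ← Category.assoc, Limits.pullback.condition]
  let s : ∀ x ∈ U ∪ V, Limits.pullback f g ⟶ F.obj x := fun x hx =>
    if h : x ∈ U then Limits.pullback.fst f g ≫ p x h
    else Limits.pullback.snd f g ≫ q x (hx.resolve_left h)
  have sU : ∀ x (h : x ∈ U), s x (Or.inl h) = Limits.pullback.fst f g ≫ p x h :=
    fun x h => dif_pos h
  have sV : ∀ x (h : x ∈ V), s x (Or.inr h) = Limits.pullback.snd f g ≫ q x h := by
    intro x h
    by_cases hx : x ∈ U
    · rw [← agree x hx h]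
      exact dif_pos hx
    · exact dif_neg hx
  refine ⟨Limits.pullback f g, s, ?_, ?_⟩
  · intro x y hx hy h
    rcases hx with hx | hx
    · rw [sU x hx, sU y (hUup h hx), Category.assoc, hp x y hx (hUup h hx) h]
    · rw [sV x hx, sV y (hVup h hx), Category.assoc, hq x y hx (hVup h hx) h]
  · intro T t ht
    obtain ⟨a, ha, hau⟩ := hpu T (fun x hx => t x (Or.inl hx))
      (fun x y hx hy h => ht x y (Or.inl hx) (Or.inl hy) h)
    obtain ⟨b, hb, hbu⟩ := hqu T (fun x hx => t x (Or.inr hx))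
      (fun x y hx hy h => ht x y (Or.inr hx) (Or.inr hy) h)
    obtain ⟨c, -, hcu⟩ := hru T (fun x hx => t x (Or.inl hx.1))
      (fun x y hx hy h => ht x y (Or.inl hx.1) (Or.inl hy.1) h)
    have hab : a ≫ f = b ≫ g := by
      rw [hcu (a ≫ f) (fun x hx => ?_), hcu (b ≫ g) (fun x hx => ?_)]
      · rw [Category.assoc, hg x hx, hb x hx.2]
      · rw [Category.assoc, hf x hx, ha x hx.1]
    refine ⟨Limits.pullback.lift a b hab, ?_, ?_⟩
    · rintro x (hx | hx)
      · rw [sU x hx, Limits.pullback.lift_fst_assoc, ha x hx]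
      · rw [sV x hx, Limits.pullback.lift_snd_assoc, hb x hx]
    · intro m hm
      apply Limits.pullback.hom_ext
      · rw [Limits.pullback.lift_fst]
        refine hau _ fun x hx => ?_
        rw [Category.assoc, ← sU x hx, hm x (Or.inl hx)]
      · rw [Limits.pullback.lift_snd]
        refine hbu _ fun x hx => ?_
        rw [Category.assoc, ← sV x hx, hm x (Or.inr hx)]

/-- The extension of `F : P ⥤ C` to `WithBot P` which sends the bottom element to the apex of
a given cone over `F`. -/
def coneExtend (F : P ⥤ C) (X : C) (p : ∀ x, X ⟶ F.obj x)
    (hp : ∀ x y (h : x ≤ y), p x ≫ F.map (homOfLE h) = p y) : WithBot P ⥤ C where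
  obj a := match a with
    | ⊥ => X
    | (a : P) => F.obj a
  map {a b} h := match a, b, h with
    | ⊥, ⊥, _ => 𝟙 X
    | ⊥, (b : P), _ => p b
    | (a : P), (b : P), h => F.map (homOfLE (WithBot.coe_le_coe.1 (leOfHom h)))
    | (a : P), ⊥, h => absurd (leOfHom h) (WithBot.not_coe_le_bot a)
  map_id a := by
    match a with
    | ⊥ => rfl
    | (a : P) => exact F.map_id a
  map_comp {a b c} f g := by
    match a, b, c, f, g with
    | ⊥, ⊥, ⊥, _, _ => exact (Category.id_comp _).symm
    | ⊥, ⊥, (c : P), _, _ => exact (Category.id_comp _).symm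
    | ⊥, (b : P), (c : P), _, g => exact (hp b c _).symm
    | (a : P), (b : P), (c : P), f, g => exact F.map_comp (homOfLE _) (homOfLE _)
    | (a : P), ⊥, _, f, _ => exact absurd (leOfHom f) (WithBot.not_coe_le_bot a)
    | _, (b : P), ⊥, _, g => exact absurd (leOfHom g) (WithBot.not_coe_le_bot b)

end Limits

/-! ### Stars in the doubly subdivided horn -/

section Horn

variable {n : ℕ} {k : Fin (n+1)}

/-- `A` is the set of entries of an element of `ChLam n k`. -/
def IsFace (k : Fin (n+1)) (A : Finset (Finset (Fin (n+1)))) : Prop :=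
  (A.Nonempty ∧ (∀ s ∈ A, s.Nonempty) ∧ IsChain (· ⊆ ·) (A : Set (Finset (Fin (n+1))))) ∧
    ∀ s ∈ A, s ≠ Finset.univ ∧ s ≠ Finset.univ \ {k}

lemma ChLam.isFace (A : ChLam n k) : IsFace k A.1.1 := ⟨A.1.2, A.2⟩

lemma IsFace.mono {A B : Finset (Finset (Fin (n+1)))} (hB : IsFace k B) (hA : A.Nonempty)
    (h : A ⊆ B) : IsFace k A :=
  ⟨⟨hA, fun s hs => hB.1.2.1 s (h hs), hB.1.2.2.mono (by exact_mod_cast h)⟩,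
    fun s hs => hB.2 s (h hs)⟩

lemma IsFace.insert {A : Finset (Finset (Fin (n+1)))} {c : Finset (Fin (n+1))}
    (hA : IsFace k A) (hc : c.Nonempty) (h1 : c ≠ Finset.univ) (h2 : c ≠ Finset.univ \ {k})
    (h : ∀ s ∈ A, c ⊆ s ∨ s ⊆ c) : IsFace k (insert c A) := by
  refine ⟨⟨Finset.insert_nonempty _ _, ?_, ?_⟩, ?_⟩
  · simpa using ⟨hc, hA.1.2.1⟩
  · rw [Finset.coe_insert]
    exact hA.1.2.2.insert fun s hs _ => h s hs
  · simpa using ⟨⟨h1, h2⟩, fun s hs => by simpa using hA.2 s hs⟩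

/-- The up-set of those chains in the horn that contain `τ` and have an entry in `W`. -/
def chainStar (k : Fin (n+1)) (τ W : Finset (Finset (Fin (n+1)))) : Set (ChLam n k) :=
  {A | τ ⊆ A.1.1 ∧ ∃ w ∈ W, w ∈ A.1.1}

lemma isUpperSet_star (τ W : Finset (Finset (Fin (n+1)))) : IsUpperSet (chainStar k τ W) := by
  rintro A B (h : A.1.1 ⊆ B.1.1) ⟨h1, w, hw, hwA⟩
  exact ⟨h1.trans h, w, hw, h hwA⟩

lemma star_insert (τ W : Finset (Finset (Fin (n+1)))) (v : Finset (Fin (n+1))) :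
    chainStar k τ (insert v W) = chainStar k τ W ∪ {A | insert v τ ⊆ A.1.1} := by
  ext A
  simp only [chainStar, Set.mem_ofPred_eq, Set.mem_union, Finset.insert_subset_iff,
    Finset.exists_mem_insert]
  rw [and_or_left, or_comm, and_comm (a := v ∈ A.1.1), or_comm]

variable {C : Type*} [Category C]

lemma hasLimitOn_superset (F : ChLam n k ⥤ C) {σ : Finset (Finset (Fin (n+1)))}
    (hσ : IsFace k σ) : HasLimitOn F {A : ChLam n k | σ ⊆ A.1.1} :=
  hasLimitOn_Ici F ⟨⟨σ, hσ.1⟩, hσ.2⟩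

/-- Adding a vertex `v` to `W` preserves goodness (`HasLimitOn`) of `chainStar τ W`, provided that its link
`chainStar (insert v τ) W` is good; if `insert v τ` is not a face, nothing is added at all. -/
lemma hasLimitOn_star_insert [Limits.HasPullbacks C] (F : ChLam n k ⥤ C)
    {τ W : Finset (Finset (Fin (n+1)))} {v : Finset (Fin (n+1))}
    (hW : HasLimitOn F (chainStar k τ W))
    (hlink : IsFace k (insert v τ) → HasLimitOn F (chainStar k (insert v τ) W)) :
    HasLimitOn F (chainStar k τ (insert v W)) := by
  rw [star_insert]
  by_cases hv : IsFace k (insert v τ)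
  · refine hW.union (isUpperSet_star _ _) ?_ (hasLimitOn_superset F hv) ?_
    · intro A B (h : A.1.1 ⊆ B.1.1) hA
      exact Set.mem_ofPred_eq ▸ (Finset.Subset.trans hA h)
    · convert hlink hv using 1
      ext A
      simp only [chainStar, Set.mem_ofPred_eq, Set.mem_inter_iff, Finset.insert_subset_iff]
      tauto
  · convert hW using 1
    refine Set.union_eq_left.2 fun A hA => ?_
    exact absurd (A.isFace.mono (Finset.insert_nonempty _ _) hA) hv

/-- If `c` is a cone point, in the sense that `c` can be added to `τ ⊆ Z` and to every chain in
`Z` containing `τ`, then `chainStar τ (insert c W)` is good for every `W ⊆ Z`. The set `τ` may be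
empty, in which case `insert c τ` being a face says that `c` is a vertex of the horn. -/
lemma hasLimitOn_star [Limits.HasPullbacks C] (F : ChLam n k ⥤ C)
    (c : Finset (Fin (n+1))) (Z W : Finset (Finset (Fin (n+1)))) (hWZ : W ⊆ Z) :
    ∀ τ ⊆ Z, IsFace k (insert c τ) →
      (∀ A, IsFace k A → A ⊆ Z → τ ⊆ A → IsFace k (insert c A)) →
      HasLimitOn F (chainStar k τ (insert c W)) := by
  induction W using Finset.induction_on with
  | empty =>
    intro τ _ hτ _
    convert hasLimitOn_superset F hτ using 1
    ext A
    simp [chainStar, Finset.insert_subset_iff, and_comm]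
  | insert v W _ ih =>
    intro τ hτZ hτ hZ
    obtain ⟨hvZ, hWZ⟩ := Finset.insert_subset_iff.1 hWZ
    rw [Finset.insert_comm]
    refine hasLimitOn_star_insert F (ih hWZ τ hτZ hτ hZ) fun hv => ?_
    have hsub : insert v τ ⊆ Z := Finset.insert_subset hvZ hτZ
    exact ih hWZ _ hsub (hZ _ hv hsub (Finset.subset_insert _ _))
      fun A hA hAZ h => hZ A hA hAZ ((Finset.subset_insert _ _).trans h)

/-- The sets not containing `k` may be added to those containing `k`, in order of increasing
cardinality, without losing goodness. -/
lemma hasLimitOn_star_union [Limits.HasPullbacks C] (hn : 1 ≤ n) (F : ChLam n k ⥤ C)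
    (S : Finset (Finset (Fin (n+1)))) (hS : ∀ s ∈ S, k ∉ s) :
    HasLimitOn F (chainStar k ∅ (S ∪ Finset.univ.filter (k ∈ ·))) := by
  refine Finset.induction_on_max_value (motive := fun S => (∀ s ∈ S, k ∉ s) →
    HasLimitOn F (chainStar k ∅ (S ∪ Finset.univ.filter (k ∈ ·)))) Finset.card S ?_ ?_ hS
  · intro _
    obtain ⟨j, hj⟩ : ∃ j : Fin (n+1), j ≠ k := by
      have : Nontrivial (Fin (n+1)) := Fin.nontrivial_iff_two_le.2 (by omega)
      exact exists_ne k
    have h1 : ({k} : Finset (Fin (n+1))) ≠ Finset.univ := fun h =>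
      hj (Finset.mem_singleton.1 (h ▸ Finset.mem_univ j))
    have h2 : ({k} : Finset (Fin (n+1))) ≠ Finset.univ \ {k} := fun h => by
      have := h ▸ Finset.mem_singleton_self k
      simp at this
    have := hasLimitOn_star F {k} (Finset.univ.filter (k ∈ ·)) (Finset.univ.filter (k ∈ ·))
      subset_rfl ∅ (Finset.empty_subset _)
      ⟨⟨by simp, by simp, by simp⟩, by simpa using ⟨h1, h2⟩⟩
      (fun A hA hAZ _ => hA.insert (by simp) h1 h2 fun s hs =>
        Or.inl (by simpa using hAZ hs))
    rwa [Finset.insert_eq_self.2 (by simp), ← Finset.empty_union (Finset.univ.filter (k ∈ ·))] at this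
  · intro v S hvS hmax ih hS
    have hkv : k ∉ v := hS v (Finset.mem_insert_self _ _)
    rw [Finset.insert_union]
    refine hasLimitOn_star_insert F (ih fun s hs => hS s (Finset.mem_insert_of_mem hs)) ?_
    intro hv
    have hc1 : insert k v ≠ Finset.univ := fun h => by
      refine (hv.2 v (by simp)).2 ?_
      rw [← h, Finset.insert_sdiff_of_mem _ (by simp), Finset.sdiff_singleton_eq_erase,
        Finset.erase_eq_of_notMem hkv]
    have hc2 : insert k v ≠ Finset.univ \ {k} := fun h => by
      have := h ▸ Finset.mem_insert_self k v
      simp at this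
    have hcne : (insert k v).Nonempty := Finset.insert_nonempty _ _
    have := hasLimitOn_star F (insert k v) (insert v (S ∪ Finset.univ.filter (k ∈ ·)))
      (S ∪ Finset.univ.filter (k ∈ ·)) (Finset.subset_insert _ _) (insert v ∅)
      (by simp) (hv.insert hcne hc1 hc2 (by simp)) ?_
    · have hmem : insert k v ∈ S ∪ Finset.univ.filter (k ∈ ·) := by simp
      rwa [Finset.insert_eq_self.2 hmem] at this
    · intro A hA hAZ hvA
      refine hA.insert hcne hc1 hc2 fun s hs => ?_
      have hvA' : v ∈ A := hvA (by simp)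
      rcases hA.1.2.2.total hs hvA' with h | h
      · exact Or.inr (h.trans (Finset.subset_insert _ _))
      · have hsZ := hAZ hs
        simp only [Finset.mem_insert, Finset.mem_union, Finset.mem_filter, Finset.mem_univ,
          true_and] at hsZ
        rcases hsZ with rfl | hsS | hks
        · exact Or.inr (Finset.subset_insert _ _)
        · exact absurd (Finset.eq_of_subset_of_card_le h (hmax s hsS) ▸ hsS) hvS
        · exact Or.inl (Finset.insert_subset hks h)

lemma exists_cone [Limits.HasPullbacks C] (hn : 1 ≤ n) (F : ChLam n k ⥤ C) :
    ∃ (X : C) (p : ∀ x, X ⟶ F.obj x), ∀ x y (h : x ≤ y), p x ≫ F.map (homOfLE h) = p y := by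
  obtain ⟨X, p, hp, -⟩ := hasLimitOn_star_union hn F (Finset.univ.filter (k ∉ ·)) (by simp)
  have hall : ∀ x : ChLam n k,
      x ∈ chainStar k ∅ (Finset.univ.filter (k ∉ ·) ∪ Finset.univ.filter (k ∈ ·)) := by
    intro x
    obtain ⟨s, hs⟩ := x.1.2.1
    refine ⟨Finset.empty_subset _, s, ?_, hs⟩
    simp [(em (k ∈ s)).symm]
  exact ⟨X, fun x => p x (hall x), fun x y h => hp x y _ _ h⟩

/-! ### The retraction onto the horn -/

/-- The entries of `A` other than `univ` and `univ \ {k}`. -/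
def core (k : Fin (n+1)) (A : Finset (Finset (Fin (n+1)))) : Finset (Finset (Fin (n+1))) :=
  A.filter fun s => s ≠ Finset.univ ∧ s ≠ Finset.univ \ {k}

/-- The partial retraction of the simplex onto the horn deleting the entries `univ` and
`univ \ {k}`; its value is `⊥` if no other entries are present. -/
def retract (k : Fin (n+1)) (A : Chain2 n) : WithBot (ChLam n k) :=
  if h : (core k A.1).Nonempty then
    ((⟨⟨core k A.1, h, fun s hs => A.2.2.1 s (Finset.filter_subset _ _ hs),
      A.2.2.2.mono (by exact_mod_cast Finset.filter_subset _ _)⟩,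
      fun _ hs => (Finset.mem_filter.1 hs).2⟩ : ChLam n k) : WithBot (ChLam n k))
  else ⊥

lemma retract_monotone : Monotone (retract (n := n) k) := by
  intro A B h
  have hc : core k A.1 ⊆ core k B.1 := Finset.filter_subset_filter _ h
  unfold retract
  split_ifs with hA hB
  · exact WithBot.coe_le_coe.2 hc
  · exact absurd (hA.mono hc) hB
  · exact bot_le
  · exact le_rfl

lemma retract_coe (A : ChLam n k) : retract k A.1 = (A : WithBot (ChLam n k)) := by
  have h : core k A.1.1 = A.1.1 := Finset.filter_true_of_mem A.2
  unfold retract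
  rw [dif_pos (h.symm ▸ A.1.2.1)]
  exact congrArg _ (Subtype.ext (Subtype.ext h))

end Horn

/-- A category with all pullbacks has the extension property against all doubly
subdivided horn inclusions `c Sd² Λ^k[n] → c Sd² Δ[n]`; i.e. `Ex² N C` is a Kan complex,
so `C` is fibrant in the Thomason model structure. -/
theorem thomason_fibrant_of_hasPullbacks (C : Type*) [Category C]
    [Limits.HasPullbacks C] :
    ∀ (n : ℕ), 1 ≤ n → ∀ (k : Fin (n+1)) (F : ChLam n k ⥤ C),
      ∃ G : Chain2 n ⥤ C, chLamIncl n k ⋙ G = F := by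
  intro n hn k F
  obtain ⟨X, p, hp⟩ := exists_cone hn F
  refine ⟨retract_monotone.functor ⋙ coneExtend F X p hp, ?_⟩
  -- On the horn the retraction is the canonical map into `WithBot`; functors into a poset
  -- are equal once they agree on objects.
  have h : chLamIncl n k ⋙ (retract_monotone (k := k)).functor =
      (WithBot.coe_mono (α := ChLam n k)).functor :=
    CategoryTheory.Functor.ext (fun A => retract_coe A) (fun _ _ _ => Subsingleton.elim _ _)
  rw [← Functor.assoc, h]
  rfl
end

section
/- Let S¹ denote the unit circle in ℂ, let H₋ = {z ∈ S¹ : Im z ≤ 0} be the closed lower semicircle and H₊ = {z ∈ S¹ : Im z ≥ 0} the closed upper semicircle. Let f, g : S¹ → S¹ be continuous maps such that f is constant on H₋ and g is constant on H₊, and let u, v : S¹ → X be continuous maps into a topological space X with u ∘ f = v ∘ g. Then the composite u ∘ f : S¹ → X is a constant map; in particular, u ∘ f is not a homotopy equivalence. -/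
/-!
Both semicircles contain the point `1`, so `u ∘ f` takes the value `u (f 1)` on the lower one, and
`v ∘ g = u ∘ f` takes that same value on the upper one; hence `u ∘ f` is constant.

A constant homotopy equivalence out of `S¹` would make the identity of `S¹` nullhomotopic.
Lifting such a nullhomotopy through the covering `Circle.exp : ℝ → S¹` produces a continuous
section `s` of `Circle.exp`. By uniqueness of lifts `s (exp t) = t + s 1` for all `t`, which is
absurd at `t = 2π` (`circle_id_not_nullhomotopic`).
-/

open ContinuousMap

/-- The covering `Circle.exp` has no continuous section. -/
lemma circle_exp_no_section (s : C(Circle, ℝ)) (hs : ∀ z, Circle.exp (s z) = z) : False := by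
  have key : (fun t : ℝ => s (Circle.exp t)) = fun t => t + s 1 := by
    refine Circle.isCoveringMap_exp.eq_of_comp_eq (by fun_prop) (by fun_prop) ?_ 0 (by simp)
    funext t
    simp [hs, Circle.exp_add]
  have h := congrFun key (2 * Real.pi)
  simp only [Circle.exp_two_pi] at h
  linarith [Real.pi_pos]

lemma circle_id_not_nullhomotopic (c : Circle) :
    ¬ (ContinuousMap.const Circle c).Homotopic (ContinuousMap.id Circle) := by
  rintro ⟨H⟩
  obtain ⟨t₀, ht₀⟩ : ∃ t, Circle.exp t = c := ⟨_, Circle.exp_arg c⟩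
  have H_0 : ∀ a, H.toContinuousMap (0, a) =
      Circle.exp (ContinuousMap.const Circle t₀ a) := fun a => by simp [ht₀]
  -- The time-one end of the lifted homotopy lifts the identity.
  let L := Circle.isCoveringMap_exp.liftHomotopy H.toContinuousMap (.const Circle t₀) H_0
  refine circle_exp_no_section ⟨fun z => L (1, z), by fun_prop⟩ fun z => ?_
  have := congrFun (Circle.isCoveringMap_exp.liftHomotopy_lifts H.toContinuousMap
    (.const Circle t₀) H_0) (1, z)
  exact this.trans (H.apply_one z)

/-- Let `f, g : S¹ → S¹` be continuous maps such that `f` is constant on the closed lower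
semicircle and `g` is constant on the closed upper semicircle, and let `u, v : S¹ → X` be
continuous maps with `u ∘ f = v ∘ g`.  Then `u ∘ f` is a constant map; in particular,
`u ∘ f` is not a homotopy equivalence. -/
theorem comp_constant_not_homotopyEquiv {X : Type*} [TopologicalSpace X]
    (f g : C(Metric.sphere (0 : ℂ) 1, Metric.sphere (0 : ℂ) 1))
    (u v : C(Metric.sphere (0 : ℂ) 1, X))
    (hf : ∀ z w : Metric.sphere (0 : ℂ) 1,
      (z : ℂ).im ≤ 0 → (w : ℂ).im ≤ 0 → f z = f w)
    (hg : ∀ z w : Metric.sphere (0 : ℂ) 1,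
      0 ≤ (z : ℂ).im → 0 ≤ (w : ℂ).im → g z = g w)
    (huv : ∀ z, u (f z) = v (g z)) :
    (∃ c : X, ∀ z, u (f z) = c) ∧
    ¬ ∃ e : ContinuousMap.HomotopyEquiv (Metric.sphere (0 : ℂ) 1) X,
        ∀ z, e.toFun z = u (f z) := by
  have hconst : ∃ c : X, ∀ z, u (f z) = c := by
    let p : Metric.sphere (0 : ℂ) 1 := ⟨1, by simp⟩
    have hp : (p : ℂ).im = 0 := Complex.one_im
    refine ⟨u (f p), fun z => ?_⟩
    rcases le_total (z : ℂ).im 0 with h | h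
    · rw [hf z p h hp.le]
    · rw [huv, huv, hg z p h hp.ge]
  refine ⟨hconst, ?_⟩
  rintro ⟨e, he⟩
  obtain ⟨c, hc⟩ := hconst
  have h : e.invFun.comp e.toFun = ContinuousMap.const _ (e.invFun c) := by
    ext1 z
    simp only [ContinuousMap.comp_apply, ContinuousMap.const_apply]
    rw [he, hc]
  have hl := e.left_inv
  rw [h] at hl
  -- `Circle` and the unit sphere of `ℂ` are definitionally the same space.
  exact circle_id_not_nullhomotopic (e.invFun c) hl
end
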